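/- Let k be a field, R = k[X]/(X^7), and B = k[X]/(X^7) ⊕ k[X]/(X^6) ⊕ k[X]/(X^4) ⊕ k[X]/(X^3) ⊕ k[X]/(X), regarded as an R-module, with e₁, …, e₅ the canonical generators of the five summands. For λ ∈ k let A_λ be the R-submodule of B generated by u₁ = X^4 e₁ + X e₄ + e₅, u₂ = X^3 e₂ + X^2 e₃ + e₅, and u₃ = X^3 e₃ + λ X^2 e₄. Then X^3·A_λ = 0, so (A_λ, B) is an object of S_3(k[T]/T^7); each pair (A_λ, B) is indecomposable, and for λ, μ ∈ k with λ ≠ μ the pairs (A_λ, B) and (A_μ, B) are not isomorphic. -/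

import Mathlib

/-!
Cover `B` by the free module `k[X]⁵` and lift an endomorphism `f` of `B` to a matrix `F` over
`k[X]`. As the five lengths are distinct, the constant-term matrix of `F` is triangular for the
order of the lengths. If moreover `f` maps `A_λ` into `A_μ`, comparing coefficients in
`f(uᵢ) ∈ A_μ` shows that all diagonal constant terms equal one scalar `a` and that `λa = μa`.
Then `f - a` is nilpotent modulo `X`, hence nilpotent. So an idempotent preserving `A_λ` is `0` or
`1`, and for `λ ≠ μ` the scalar `a` vanishes, so `f` is nilpotent and cannot be invertible.
-/

open Polynomial

noncomputable section

/-- The cyclic module `k[X]/(Xⁱ)`, as a module over `k[X]`; modules over `k[X]` annihilated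
by `Xⁿ` are exactly the modules over `R = k[X]/(Xⁿ)`. -/
abbrev Bq (k : Type) [Field k] (i : ℕ) : Type :=
  Polynomial k ⧸ (Ideal.span {(X : Polynomial k) ^ i} : Ideal (Polynomial k))

/-- Indecomposability of a pair (submodule of a module). -/
def PairIndec {k : Type} [Field k] (B : Type) [AddCommGroup B] [Module (Polynomial k) B]
    (A : Submodule (Polynomial k) B) : Prop :=
  (∃ b : B, b ≠ 0) ∧
    ∀ B₁ B₂ : Submodule (Polynomial k) B,
      B₁ ⊓ B₂ = ⊥ → B₁ ⊔ B₂ = ⊤ → A = A ⊓ B₁ ⊔ A ⊓ B₂ → B₁ = ⊥ ∨ B₂ = ⊥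

/-- Isomorphism of pairs over a common ambient module: a linear automorphism carrying the
one submodule onto the other. -/
def PairIso {k : Type} [Field k] (B : Type) [AddCommGroup B] [Module (Polynomial k) B]
    (A A' : Submodule (Polynomial k) B) : Prop :=
  ∃ e : B ≃ₗ[Polynomial k] B, A.map e.toLinearMap = A'

/-- `B = k[X]/(X⁷) ⊕ k[X]/(X⁶) ⊕ k[X]/(X⁴) ⊕ k[X]/(X³) ⊕ k[X]/(X)`. -/
abbrev B9 (k : Type) [Field k] : Type := Bq k 7 × Bq k 6 × Bq k 4 × Bq k 3 × Bq k 1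

/-- `u₁ = X⁴e₁ + Xe₄ + e₅`. -/
def u₁ (k : Type) [Field k] : B9 k :=
  (Submodule.Quotient.mk (X ^ 4), 0, 0, Submodule.Quotient.mk X, Submodule.Quotient.mk 1)

/-- `u₂ = X³e₂ + X²e₃ + e₅`. -/
def u₂ (k : Type) [Field k] : B9 k :=
  (0, Submodule.Quotient.mk (X ^ 3), Submodule.Quotient.mk (X ^ 2), 0, Submodule.Quotient.mk 1)

/-- `u₃ = X³e₃ + λX²e₄`. -/
def u₃ (k : Type) [Field k] (l : k) : B9 k :=
  (0, 0, Submodule.Quotient.mk (X ^ 3), Submodule.Quotient.mk (C l * X ^ 2), 0)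

/-- `A_λ = ⟨u₁, u₂, u₃⟩ ⊆ B`. -/
def A9 (k : Type) [Field k] (l : k) : Submodule (Polynomial k) (B9 k) :=
  Submodule.span (Polynomial k) {u₁ k, u₂ k, u₃ k l}

theorem isNilpotent_of_strictTriangular {ι R : Type*} [Fintype ι] [DecidableEq ι]
    [Semiring R] {N : Matrix ι ι R} {b : ι → ℕ} (hN : ∀ i j, b j ≤ b i → N i j = 0) :
    IsNilpotent N := by
  have pow_apply_eq_zero (r : ℕ) : ∀ i j, b j < b i + r → (N ^ r) i j = 0 := by
    induction r with
    | zero =>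
      intro i j hij
      rw [pow_zero, Matrix.one_apply_ne]
      rintro rfl
      simp at hij
    | succ r ih =>
      intro i j hij
      rw [pow_succ, Matrix.mul_apply]
      refine Finset.sum_eq_zero fun s _ => ?_
      rcases lt_or_ge (b s) (b i + r) with hs | hs
      · rw [ih i s hs, zero_mul]
      · rw [hN s j (by lia), mul_zero]
  refine ⟨Finset.univ.sup b + 1, Matrix.ext fun i j => pow_apply_eq_zero _ i j ?_⟩
  have := Finset.le_sup (f := b) (Finset.mem_univ j)
  lia

theorem isNilpotent_of_range_le_smul_top {R M : Type*} [CommSemiring R] [AddCommMonoid M]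
    [Module R M] {I : Ideal R} {N : ℕ} (hI : I ^ N • (⊤ : Submodule R M) = ⊥) {g : Module.End R M}
    (hg : LinearMap.range g ≤ I • ⊤) : IsNilpotent g := by
  have range_pow_le (s : ℕ) : LinearMap.range (g ^ s) ≤ I ^ s • ⊤ := by
    induction s with
    | zero => simp
    | succ s ih =>
      calc LinearMap.range (g ^ (s + 1))
          = (LinearMap.range g).map (g ^ s) := LinearMap.range_comp g (g ^ s)
        _ ≤ (I • ⊤ : Submodule R M).map (g ^ s) := Submodule.map_mono hg
        _ = I • LinearMap.range (g ^ s) := by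
          rw [Submodule.map_smul'', Submodule.map_top]
        _ ≤ I • I ^ s • ⊤ := smul_mono_right I ih
        _ = I ^ (s + 1) • ⊤ := by rw [pow_succ', Submodule.mul_smul]
  exact ⟨N, LinearMap.range_eq_bot.mp (le_bot_iff.mp (hI ▸ range_pow_le N))⟩

theorem eq_zero_or_one_of_isIdempotentElem_of_isNilpotent_sub {R A : Type*} [CommRing R] [Ring A]
    [Algebra R A] {e : A} (he : IsIdempotentElem e) {c : R} (hc : c = 0 ∨ IsUnit c)
    (h : IsNilpotent (e - algebraMap R A c)) : e = 0 ∨ e = 1 := by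
  rcases hc with rfl | hc
  · left
    rw [map_zero, sub_zero] at h
    obtain ⟨n, hn⟩ := h
    rw [← he.pow_succ_eq n, pow_succ, hn, zero_mul]
  · right
    have he_unit : IsUnit e := by
      simpa using h.isUnit_add_left_of_commute (hc.map (algebraMap R A))
        (Algebra.commutes c _).symm
    exact (IsIdempotentElem.iff_eq_one_of_isUnit he_unit).mp he

theorem exists_matrix_lift {R M ι : Type*} [CommSemiring R] [AddCommMonoid M] [Module R M]
    [Fintype ι] {π : (ι → R) →ₗ[R] M} (hπ : Function.Surjective π) (f : Module.End R M) :
    ∃ F : Matrix ι ι R, ∀ p, π (F.mulVec p) = f (π p) := by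
  classical
  obtain ⟨g, hg⟩ := Module.projective_lifting_property π (f ∘ₗ π) hπ
  refine ⟨LinearMap.toMatrix' g, fun p => ?_⟩
  rw [LinearMap.toMatrix'_mulVec]
  exact LinearMap.congr_fun hg p

theorem map_pow_mulVec {R M ι : Type*} [CommSemiring R] [AddCommMonoid M] [Module R M]
    [Fintype ι] [DecidableEq ι] {π : (ι → R) →ₗ[R] M} {F : Matrix ι ι R} {f : Module.End R M}
    (hF : ∀ p, π (F.mulVec p) = f (π p)) (s : ℕ) (p : ι → R) :
    π ((F ^ s).mulVec p) = (f ^ s) (π p) := by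
  induction s generalizing p with
  | zero => simp
  | succ s ih => rw [pow_succ, ← Matrix.mulVec_mulVec, ih, hF, pow_succ, Module.End.mul_apply]

/-- `π : k[X]^ι → M` is a presentation of `M` as `⨁ᵢ k[X]/(X^{nᵢ})`: it is onto, with kernel
`∏ᵢ (X^{nᵢ})`. -/
structure IsCyclicPresentation {k M ι : Type*} [CommRing k] [AddCommGroup M] [Module k[X] M]
    (π : (ι → k[X]) →ₗ[k[X]] M) (n : ι → ℕ) : Prop where
  surjective : Function.Surjective π
  apply_eq_zero_iff : ∀ p, π p = 0 ↔ ∀ i, X ^ n i ∣ p i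

namespace IsCyclicPresentation

variable {k M ι : Type*} [CommRing k] [AddCommGroup M] [Module k[X] M]
  {π : (ι → k[X]) →ₗ[k[X]] M} {n : ι → ℕ}

theorem apply_eq_iff_coeff (h : IsCyclicPresentation π n) (p q : ι → k[X]) :
    π p = π q ↔ ∀ i, ∀ d < n i, (p i).coeff d = (q i).coeff d := by
  rw [← sub_eq_zero, ← map_sub, h.apply_eq_zero_iff]
  simp only [Pi.sub_apply, X_pow_dvd_iff, coeff_sub, sub_eq_zero]

theorem X_pow_smul_eq_zero (h : IsCyclicPresentation π n) {N : ℕ} (hN : ∀ i, n i ≤ N) (b : M) :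
    (X ^ N : k[X]) • b = 0 := by
  obtain ⟨p, rfl⟩ := h.surjective b
  rw [← map_smul, h.apply_eq_zero_iff]
  exact fun i => (pow_dvd_pow X (hN i)).mul_right (p i)

variable [Fintype ι] {F : Matrix ι ι k[X]} {f : Module.End k[X] M}

theorem coeff_lift_eq_zero (h : IsCyclicPresentation π n)
    (hF : ∀ p, π (F.mulVec p) = f (π p)) {i j : ι} {d : ℕ} (hd : d + n j < n i) :
    (F i j).coeff d = 0 := by
  classical
  have generator_killed : π (Pi.single j (X ^ n j)) = 0 := by
    rw [h.apply_eq_zero_iff]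
    intro i
    rcases eq_or_ne i j with rfl | hij
    · rw [Pi.single_eq_same]
    · rw [Pi.single_eq_of_ne hij]
      exact dvd_zero _
  have entry_dvd : X ^ n i ∣ F i j * X ^ n j := by
    have := (h.apply_eq_zero_iff _).mp (by rw [hF, generator_killed, map_zero]) i
    rwa [Matrix.mulVec_single] at this
  rw [← coeff_mul_X_pow (F i j) (n j) d]
  exact X_pow_dvd_iff.mp entry_dvd _ hd

theorem isNilpotent_of_isNilpotent_constantCoeff [DecidableEq ι] (h : IsCyclicPresentation π n)
    (hF : ∀ p, π (F.mulVec p) = f (π p)) (hnil : IsNilpotent (F.map constantCoeff)) :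
    IsNilpotent f := by
  obtain ⟨r, hr⟩ := hnil
  have X_dvd_pow (i j : ι) : X ∣ (F ^ r) i j := by
    rw [X_dvd_iff, ← constantCoeff_apply]
    have map_pow_eq_zero : (F ^ r).map constantCoeff = 0 :=
      (map_pow (constantCoeff (R := k)).mapMatrix F r).trans hr
    exact congr_fun₂ map_pow_eq_zero i j
  choose G hG using X_dvd_pow
  have pow_eq_smul : F ^ r = (X : k[X]) • Matrix.of G := Matrix.ext hG
  have range_le : LinearMap.range (f ^ r) ≤ Ideal.span {(X : k[X])} • (⊤ : Submodule k[X] M) := by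
    rintro _ ⟨b, rfl⟩
    obtain ⟨p, rfl⟩ := h.surjective b
    rw [← map_pow_mulVec hF, pow_eq_smul, Matrix.smul_mulVec, map_smul]
    exact Submodule.smul_mem_smul (Ideal.mem_span_singleton_self X) Submodule.mem_top
  refine (isNilpotent_of_range_le_smul_top (N := Finset.univ.sup n) ?_ range_le).of_pow
  rw [Ideal.span_singleton_pow, Submodule.ideal_span_singleton_smul, eq_bot_iff]
  intro b hb
  obtain ⟨c, -, rfl⟩ := (Submodule.mem_smul_pointwise_iff_exists ..).mp hb
  exact h.X_pow_smul_eq_zero (fun i => Finset.le_sup (Finset.mem_univ i)) c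

theorem isNilpotent_sub_algebraMap_of_diagonal (h : IsCyclicPresentation π n)
    (hn : Function.Injective n) (hF : ∀ p, π (F.mulVec p) = f (π p)) {a : k}
    (hdiag : ∀ i, (F i i).coeff 0 = a) :
    IsNilpotent (f - algebraMap k[X] (Module.End k[X] M) (C a)) := by
  classical
  refine h.isNilpotent_of_isNilpotent_constantCoeff (F := F - (C a : k[X]) • 1) (fun p => ?_)
    (isNilpotent_of_strictTriangular (b := n) fun i j hij => ?_)
  · simp only [Matrix.sub_mulVec, Matrix.smul_mulVec, Matrix.one_mulVec, map_sub, hF, map_smul,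
      LinearMap.sub_apply, Module.algebraMap_end_apply]
  rcases hij.lt_or_eq with hlt | heq
  · have hne : i ≠ j := by
      rintro rfl
      exact lt_irrefl _ hlt
    simp [hne, h.coeff_lift_eq_zero hF (d := 0) (by simpa using hlt)]
  · obtain rfl := hn heq
    simp [hdiag]

end IsCyclicPresentation

theorem pairIndec_of_forall_isIdempotentElem {k : Type} [Field k] {B : Type} [AddCommGroup B]
    [Module k[X] B] [Nontrivial B] {A : Submodule k[X] B}
    (h : ∀ f : Module.End k[X] B, IsIdempotentElem f → A ≤ A.comap f → f = 0 ∨ f = 1) :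
    PairIndec B A := by
  refine ⟨exists_ne 0, fun B₁ B₂ hinf hsup hA => ?_⟩
  have hcompl : IsCompl B₁ B₂ := IsCompl.of_eq hinf hsup
  have proj_mapsTo : A ≤ A.comap (B₁.projection B₂ hcompl) := by
    intro x hx
    rw [hA] at hx
    obtain ⟨y, ⟨hyA, hy⟩, z, ⟨-, hz⟩, rfl⟩ := Submodule.mem_sup.mp hx
    rwa [Submodule.mem_comap, map_add, Submodule.projection_apply_of_mem_left hcompl hy,
      (Submodule.projection_apply_eq_zero_iff hcompl).mpr hz, add_zero]
  rcases h _ (Submodule.isIdempotentElem_projection hcompl) proj_mapsTo with hzero | hone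
  · left
    rw [← Submodule.range_projection hcompl, hzero, LinearMap.range_zero]
  · right
    rw [← Submodule.ker_projection hcompl, hone]
    exact LinearMap.ker_id

section Family

variable {k : Type} [Field k]

/-- The lengths of the five cyclic summands of `B`. -/
def cyclicLength : Fin 5 → ℕ := ![7, 6, 4, 3, 1]

variable (k) in
/-- The map `k[X]⁵ → B` with `p ↦ ∑ pᵢ eᵢ₊₁` (indices start at `0`). -/
def cover : (Fin 5 → k[X]) →ₗ[k[X]] B9 k where
  toFun p := (Submodule.Quotient.mk (p 0), Submodule.Quotient.mk (p 1),
    Submodule.Quotient.mk (p 2), Submodule.Quotient.mk (p 3), Submodule.Quotient.mk (p 4))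
  map_add' _ _ := rfl
  map_smul' _ _ := rfl

variable (k) in
theorem isCyclicPresentation_cover : IsCyclicPresentation (cover k) cyclicLength where
  surjective := by
    rintro ⟨b₁, b₂, b₃, b₄, b₅⟩
    obtain ⟨p₁, rfl⟩ := Submodule.Quotient.mk_surjective _ b₁
    obtain ⟨p₂, rfl⟩ := Submodule.Quotient.mk_surjective _ b₂
    obtain ⟨p₃, rfl⟩ := Submodule.Quotient.mk_surjective _ b₃
    obtain ⟨p₄, rfl⟩ := Submodule.Quotient.mk_surjective _ b₄
    obtain ⟨p₅, rfl⟩ := Submodule.Quotient.mk_surjective _ b₅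
    exact ⟨![p₁, p₂, p₃, p₄, p₅], rfl⟩
  apply_eq_zero_iff p := by
    simp [cover, cyclicLength, Fin.forall_fin_succ, Prod.ext_iff, Ideal.Quotient.eq_zero_iff_dvd]

instance : Nontrivial (B9 k) := by
  refine nontrivial_of_ne (cover k (Pi.single 0 1)) 0 fun h => ?_
  have X_pow_dvd_one : X ^ 7 ∣ (1 : k[X]) :=
    ((isCyclicPresentation_cover k).apply_eq_zero_iff _).mp h 0
  simpa using X_pow_dvd_iff.mp X_pow_dvd_one 0 (by decide)

/-- A lift of `u₁` along `cover k`. -/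
def lift₁ : Fin 5 → k[X] := ![X ^ 4, 0, 0, X, 1]

/-- A lift of `u₂` along `cover k`. -/
def lift₂ : Fin 5 → k[X] := ![0, X ^ 3, X ^ 2, 0, 1]

/-- A lift of `u₃ k l` along `cover k`. -/
def lift₃ (l : k) : Fin 5 → k[X] := ![0, 0, X ^ 3, C l * X ^ 2, 0]

theorem cover_lift₁ : cover k lift₁ = u₁ k :=
  rfl

theorem cover_lift₂ : cover k lift₂ = u₂ k :=
  rfl

theorem cover_lift₃ (l : k) : cover k (lift₃ l) = u₃ k l :=
  rfl

theorem exists_coeff_eq_of_cover_mem_A9 {m : k} {p : Fin 5 → k[X]} (hp : cover k p ∈ A9 k m) :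
    ∃ α β γ : k[X], ∀ i, ∀ d < cyclicLength i,
      (p i).coeff d = (![α * X ^ 4, β * X ^ 3, β * X ^ 2 + γ * X ^ 3,
        α * X + C m * γ * X ^ 2, α + β] i).coeff d := by
  rw [A9, ← cover_lift₁, ← cover_lift₂, ← cover_lift₃, Submodule.mem_span_triple] at hp
  obtain ⟨α, β, γ, h⟩ := hp
  have combination : α • lift₁ + β • lift₂ + γ • lift₃ m =
      ![α * X ^ 4, β * X ^ 3, β * X ^ 2 + γ * X ^ 3, α * X + C m * γ * X ^ 2, α + β] := by
    ext1 i
    fin_cases i <;> simp [lift₁, lift₂, lift₃, mul_left_comm γ, mul_assoc]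
  simp only [← map_smul, ← map_add, combination] at h
  exact ⟨α, β, γ, ((isCyclicPresentation_cover k).apply_eq_iff_coeff _ _).mp h.symm⟩

theorem A9_le_torsionBy_X_pow_three (l : k) :
    A9 k l ≤ Submodule.torsionBy k[X] (B9 k) (X ^ 3) := by
  rw [A9, ← cover_lift₁, ← cover_lift₂, ← cover_lift₃, Submodule.span_le]
  rintro _ (rfl | rfl | rfl) <;>
  · simp only [SetLike.mem_coe, Submodule.mem_torsionBy_iff, ← map_smul,
      (isCyclicPresentation_cover k).apply_eq_zero_iff]
    simp [Fin.forall_fin_succ, cyclicLength, lift₁, lift₂, lift₃, ← pow_add, ← pow_succ,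
      pow_dvd_pow]

theorem mulVec_lift₁ (F : Matrix (Fin 5) (Fin 5) k[X]) (i : Fin 5) :
    F.mulVec lift₁ i = F i 0 * X ^ 4 + F i 3 * X + F i 4 := by
  simp [lift₁, Matrix.mulVec, dotProduct, Fin.sum_univ_five]

theorem mulVec_lift₂ (F : Matrix (Fin 5) (Fin 5) k[X]) (i : Fin 5) :
    F.mulVec lift₂ i = F i 1 * X ^ 3 + F i 2 * X ^ 2 + F i 4 := by
  simp [lift₂, Matrix.mulVec, dotProduct, Fin.sum_univ_five]

theorem mulVec_lift₃ (F : Matrix (Fin 5) (Fin 5) k[X]) (l : k) (i : Fin 5) :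
    F.mulVec (lift₃ l) i = F i 2 * X ^ 3 + C l * F i 3 * X ^ 2 := by
  simp [lift₃, Matrix.mulVec, dotProduct, Fin.sum_univ_five, mul_left_comm, mul_assoc]

section Lift

variable {F : Matrix (Fin 5) (Fin 5) k[X]} {f : Module.End k[X] (B9 k)} {l m : k}

theorem coeff_lift_of_map_u₁_mem (hF : ∀ p, cover k (F.mulVec p) = f (cover k p))
    (h : f (u₁ k) ∈ A9 k m) :
    (F 3 3).coeff 0 = (F 0 0).coeff 0 ∧ (F 4 4).coeff 0 = (F 0 0).coeff 0 ∧
      (F 2 3).coeff 1 = 0 := by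
  have hlow (i j : Fin 5) (d : ℕ) (hd : d + cyclicLength j < cyclicLength i := by decide) :=
    (isCyclicPresentation_cover k).coeff_lift_eq_zero hF hd
  rw [← cover_lift₁, ← hF] at h
  obtain ⟨α, β, γ, h⟩ := exists_coeff_eq_of_cover_mem_A9 h
  simp only [mulVec_lift₁] at h
  have diag₀_eq : (F 0 0).coeff 0 = α.coeff 0 := by
    simpa [coeff_mul_X_pow', hlow 0 3 3, hlow 0 4 4] using h 0 4 (by decide)
  have β_eq_zero : β.coeff 0 = 0 := by
    simpa [coeff_mul_X_pow', hlow 1 3 2, hlow 1 4 3] using (h 1 3 (by decide)).symm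
  have entry₂₃_eq : (F 2 3).coeff 1 = β.coeff 0 := by
    simpa [coeff_mul_X_pow', hlow 2 4 2] using h 2 2 (by decide)
  have diag₃_eq : (F 3 3).coeff 0 = α.coeff 0 := by
    simpa [coeff_mul_X_pow', hlow 3 4 1] using h 3 1 (by decide)
  have diag₄_eq : (F 4 4).coeff 0 = α.coeff 0 + β.coeff 0 := by
    simpa using h 4 0 (by decide)
  grind

theorem coeff_lift_of_map_u₂_mem (hF : ∀ p, cover k (F.mulVec p) = f (cover k p))
    (h : f (u₂ k) ∈ A9 k m) :
    (F 1 1).coeff 0 = (F 4 4).coeff 0 ∧ (F 2 2).coeff 0 = (F 4 4).coeff 0 := by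
  have hlow (i j : Fin 5) (d : ℕ) (hd : d + cyclicLength j < cyclicLength i := by decide) :=
    (isCyclicPresentation_cover k).coeff_lift_eq_zero hF hd
  rw [← cover_lift₂, ← hF] at h
  obtain ⟨α, β, γ, h⟩ := exists_coeff_eq_of_cover_mem_A9 h
  simp only [mulVec_lift₂] at h
  have diag₁_eq : (F 1 1).coeff 0 = β.coeff 0 := by
    simpa [coeff_mul_X_pow', hlow 1 2 1, hlow 1 4 3] using h 1 3 (by decide)
  have diag₂_eq : (F 2 2).coeff 0 = β.coeff 0 := by
    simpa [coeff_mul_X_pow', hlow 2 4 2] using h 2 2 (by decide)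
  have α_eq_zero : α.coeff 0 = 0 := by
    simpa [coeff_mul_X_pow', hlow 3 4 1] using (h 3 1 (by decide)).symm
  have diag₄_eq : (F 4 4).coeff 0 = α.coeff 0 + β.coeff 0 := by
    simpa using h 4 0 (by decide)
  grind

theorem coeff_lift_of_map_u₃_mem (hF : ∀ p, cover k (F.mulVec p) = f (cover k p))
    (h : f (u₃ k l) ∈ A9 k m) :
    l * (F 3 3).coeff 0 = m * ((F 2 2).coeff 0 + l * (F 2 3).coeff 1) := by
  have hlow (i j : Fin 5) (d : ℕ) (hd : d + cyclicLength j < cyclicLength i := by decide) :=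
    (isCyclicPresentation_cover k).coeff_lift_eq_zero hF hd
  rw [← cover_lift₃, ← hF] at h
  obtain ⟨α, β, γ, h⟩ := exists_coeff_eq_of_cover_mem_A9 h
  simp only [mulVec_lift₃] at h
  have α_eq_zero : α.coeff 1 = 0 := by
    simpa [coeff_mul_X_pow', mul_assoc, hlow 0 2 2, hlow 0 3 3] using (h 0 5 (by decide)).symm
  have β_eq_zero : β.coeff 1 = 0 := by
    simpa [coeff_mul_X_pow', mul_assoc, hlow 1 2 1, hlow 1 3 2] using (h 1 4 (by decide)).symm
  have γ_eq : (F 2 2).coeff 0 + l * (F 2 3).coeff 1 = β.coeff 1 + γ.coeff 0 := by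
    simpa [coeff_mul_X_pow'] using h 2 3 (by decide)
  have diag₃_eq : l * (F 3 3).coeff 0 = α.coeff 1 + m * γ.coeff 0 := by
    simpa [coeff_mul_X_pow'] using h 3 2 (by decide)
  grind

end Lift

theorem exists_isNilpotent_sub_of_A9_le_comap {l m : k} {f : Module.End k[X] (B9 k)}
    (hf : A9 k l ≤ (A9 k m).comap f) :
    ∃ a : k, l * a = m * a ∧
      IsNilpotent (f - algebraMap k[X] (Module.End k[X] (B9 k)) (C a)) := by
  obtain ⟨F, hF⟩ := exists_matrix_lift (isCyclicPresentation_cover k).surjective f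
  obtain ⟨h₃₃, h₄₄, h₂₃⟩ := coeff_lift_of_map_u₁_mem hF (hf (Submodule.subset_span (by simp)))
  obtain ⟨h₁₁, h₂₂⟩ := coeff_lift_of_map_u₂_mem hF (hf (Submodule.subset_span (by simp)))
  have scalars := coeff_lift_of_map_u₃_mem (l := l) hF (hf (Submodule.subset_span (by simp)))
  refine ⟨(F 0 0).coeff 0, by grind,
    (isCyclicPresentation_cover k).isNilpotent_sub_algebraMap_of_diagonal (by decide) hF
      fun i => ?_⟩
  fin_cases i <;> grind

theorem pairIndec_A9 (l : k) : PairIndec (B9 k) (A9 k l) := by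
  refine pairIndec_of_forall_isIdempotentElem fun f hidem hf => ?_
  obtain ⟨a, -, hnil⟩ := exists_isNilpotent_sub_of_A9_le_comap hf
  have ha : C a = 0 ∨ IsUnit (C a) := by
    rcases eq_or_ne a 0 with rfl | ha
    · exact .inl C_0
    · exact .inr (isUnit_C.mpr ha.isUnit)
  exact eq_zero_or_one_of_isIdempotentElem_of_isNilpotent_sub hidem ha hnil

theorem isNilpotent_of_A9_le_comap_of_ne {l m : k} (hlm : l ≠ m) {f : Module.End k[X] (B9 k)}
    (hf : A9 k l ≤ (A9 k m).comap f) : IsNilpotent f := by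
  obtain ⟨a, hla, hnil⟩ := exists_isNilpotent_sub_of_A9_le_comap hf
  obtain rfl : a = 0 := by
    by_contra ha
    exact hlm (mul_right_cancel₀ ha hla)
  simpa using hnil

theorem not_pairIso_A9_of_ne {l m : k} (hlm : l ≠ m) : ¬ PairIso (B9 k) (A9 k l) (A9 k m) := by
  rintro ⟨e, he⟩
  have hnil : IsNilpotent (e.toLinearMap : Module.End k[X] (B9 k)) :=
    isNilpotent_of_A9_le_comap_of_ne hlm (Submodule.map_le_iff_le_comap.mp he.le)
  exact hnil.not_isUnit ((Module.End.isUnit_iff _).mpr e.bijective)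

end Family

/-- **The tame family in `S₃(k[T]/T⁷)`.**  `B` is a finite-dimensional `R`-module
(`R = k[X]/(X⁷)`) and `X³ • A_λ = 0`, so `(A_λ ⊆ B)` is an object of `S₃(k[T]/T⁷)`; each
pair `(A_λ ⊆ B)` is indecomposable, and for `λ ≠ μ` in `k` the pairs `(A_λ ⊆ B)` and
`(A_μ ⊆ B)` are not isomorphic. -/
theorem family_S3_T7 (k : Type) [Field k] :
    Module.Finite (Polynomial k) (B9 k) ∧
    (∀ b : B9 k, (X : Polynomial k) ^ 7 • b = 0) ∧
    (∀ l : k, ∀ x ∈ A9 k l, (X : Polynomial k) ^ 3 • x = 0) ∧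
    (∀ l : k, PairIndec (B9 k) (A9 k l)) ∧
    (∀ l m : k, l ≠ m → ¬ PairIso (B9 k) (A9 k l) (A9 k m)) := by
  have hB := isCyclicPresentation_cover k
  exact ⟨inferInstance, hB.X_pow_smul_eq_zero (by decide), A9_le_torsionBy_X_pow_three,
    pairIndec_A9, fun l m => not_pairIso_A9_of_ne⟩

end
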